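/- arXiv:2405.03035 — 8 statements merged into one kernel-verified Lean document; each statement's English description precedes it below -/
import Mathlib

section
/- For every nonempty finite sequence u₁, u₂, …, u_m of binary words, the entry in the first row and second column of the matrix product B(u₁)·B(u₂)⋯B(u_m) equals (u_m u_{m−1} ⋯ u₂ u₁)₂ / 2^{|u₁|+|u₂|+⋯+|u_m|}, the binary fraction determined by the concatenation of the words in reverse order. -/
/-!
A `2 × 2` matrix with row sums `1` is determined by its second column, read as the values at `0`
and `1` of an affine map; multiplying such matrices composes the maps, left factor first. The map
belonging to `B(u)` sends a fraction `0.w` in binary to `0.uw`. Hence `B(u) * B(v)` belongs to the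
map that prefixes `u` and then `v`, so that `B(u) * B(v) = B(vu)`.
-/

/-- The value `(u)₂` of a binary word, most significant digit first. -/
def val2 (u : List Bool) : ℕ :=
  u.foldl (fun a b => 2 * a + (if b then 1 else 0)) 0

/-- The binary-automaton matrix `B(u)`. -/
def binB (u : List Bool) : Matrix (Fin 2) (Fin 2) ℚ :=
  !![1 - (val2 u : ℚ) / 2 ^ u.length, (val2 u : ℚ) / 2 ^ u.length;
     1 - ((val2 u : ℚ) + 1) / 2 ^ u.length, ((val2 u : ℚ) + 1) / 2 ^ u.length]

/-- The matrix with row sums `1` whose second column lists the values at `0` and `1` of the affine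
map `r ↦ x + r * s`. The matrix `B(u)` is the case where `x` is the binary fraction of `u` and
`s = 2 ^ (-|u|)`. -/
def affineValueMatrix {R : Type*} [Ring R] (x s : R) : Matrix (Fin 2) (Fin 2) R :=
  !![1 - x, x; 1 - (x + s), x + s]

section AffineValueMatrix

variable {R : Type*} [Ring R]

lemma affineValueMatrix_zero_one : affineValueMatrix (0 : R) 1 = 1 := by
  simp [affineValueMatrix, Matrix.one_fin_two]

lemma affineValueMatrix_mul (x s y t : R) :
    affineValueMatrix x s * affineValueMatrix y t =
      affineValueMatrix (y + x * t) (s * t) := by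
  have row (a : R) : (1 - a) * (1 - y) + a * (1 - (y + t)) = 1 - (y + a * t) ∧
      (1 - a) * y + a * (y + t) = y + a * t := by
    constructor <;> noncomm_ring
  simp only [affineValueMatrix, Matrix.mul_fin_two, row, add_mul x s t, add_assoc]

end AffineValueMatrix

lemma val2_eq_ofDigits (u : List Bool) : val2 u = Nat.ofDigits 2 (u.reverse.map Bool.toNat) := by
  rw [Nat.ofDigits_eq_foldr, List.foldr_map, List.foldr_reverse, val2]
  congr! 3 with a b
  cases b <;> simp [add_comm]

lemma val2_append (v u : List Bool) : val2 (v ++ u) = val2 u + 2 ^ u.length * val2 v := by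
  simp only [val2_eq_ofDigits, List.reverse_append, List.map_append, Nat.ofDigits_append,
    List.length_map, List.length_reverse]

lemma val2_append_div_two_pow (v u : List Bool) :
    (val2 (v ++ u) : ℚ) / 2 ^ (v ++ u).length =
      val2 v / 2 ^ v.length + val2 u / 2 ^ u.length * (1 / 2 ^ v.length) := by
  rw [val2_append, List.length_append]
  push_cast
  field_simp
  ring

lemma binB_eq_affineValueMatrix (u : List Bool) :
    binB u = affineValueMatrix ((val2 u : ℚ) / 2 ^ u.length) (1 / 2 ^ u.length) := by
  simp only [binB, affineValueMatrix, add_div]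

lemma binB_nil : binB [] = 1 := by
  simp [binB_eq_affineValueMatrix, val2, affineValueMatrix_zero_one]

lemma binB_append (v u : List Bool) : binB (v ++ u) = binB u * binB v := by
  rw [binB_eq_affineValueMatrix, binB_eq_affineValueMatrix, binB_eq_affineValueMatrix,
    affineValueMatrix_mul, val2_append_div_two_pow, one_div_mul_one_div, ← pow_add,
    List.length_append, Nat.add_comm]

lemma prod_map_binB (us : List (List Bool)) : (us.map binB).prod = binB us.reverse.flatten := by
  induction us with
  | nil => simp [binB_nil]
  | cons u us ih => simp [ih, binB_append]

/-- The `(1,2)` entry of `B(u₁)·B(u₂)⋯B(u_m)` is the binary fraction determined by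
the concatenation `u_m u_{m-1} ⋯ u₁` of the words in reverse order. -/
theorem binB_prod_entry (us : List (List Bool)) (hus : us ≠ []) :
    (us.map binB).prod 0 1
      = (val2 us.reverse.flatten : ℚ) / 2 ^ (us.map List.length).sum := by
  have length_eq : us.reverse.flatten.length = (us.map List.length).sum := by
    rw [List.length_flatten, List.map_reverse, List.sum_reverse]
  rw [prod_map_binB, ← length_eq]
  rfl
end

section
/- Let i and j be natural numbers, and set pD = 4^{−i} + 4^{−j} − 4^{−(i+j)} and pS = 2·2^{−(i+j)} − 4^{−(i+j)}. Then: (a) if i = j, then pD·(1−pS) = pS·(1−pD); and (b) if i ≠ j and i ≡ j (mod 12), then pD·(1−pS) ≥ 2^{11}·pS·(1−pD). -/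
/-!
Everything rests on `pD - pS = (2⁻ⁱ - 2⁻ʲ)²`. It gives equality of the two outcomes for `i = j`, and
`1 - pD ≤ 1 - pS` always, so that "Different" is at least `pD / pS` times as likely as "Same". For
`i < j` the bounds `4⁻ⁱ ≤ pD` and `pS ≤ 2 · 2⁻⁽ⁱ⁺ʲ⁾` show that this ratio is at least
`2^(j - i - 1)`, and distinct congruent numbers differ by at least the modulus.
-/

/-- Probability that player `D` has a lucky coin. -/
noncomputable def pD (i j : ℕ) : ℝ := (1/4)^i + (1/4)^j - (1/4)^(i+j)

/-- Probability that player `S` has a lucky coin. -/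
noncomputable def pS (i j : ℕ) : ℝ := 2 * (1/2)^(i+j) - (1/4)^(i+j)

lemma pD_comm (i j : ℕ) : pD i j = pD j i := by
  rw [pD, pD, add_comm ((1/4 : ℝ)^i), add_comm i]

lemma pS_comm (i j : ℕ) : pS i j = pS j i := by
  rw [pS, pS, add_comm i]

lemma one_div_four_pow (n : ℕ) : (1/4 : ℝ)^n = ((1/2)^n)^2 := by
  rw [pow_right_comm]
  norm_num

lemma pD_sub_pS (i j : ℕ) : pD i j - pS i j = ((1/2)^i - (1/2)^j)^2 := by
  rw [pD, pS, one_div_four_pow i, one_div_four_pow j]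
  ring

lemma pS_le_pD (i j : ℕ) : pS i j ≤ pD i j :=
  sub_nonneg.mp (pD_sub_pS i j ▸ sq_nonneg _)

lemma pD_self_eq_pS_self (i : ℕ) : pD i i = pS i i := by
  rw [← sub_eq_zero, pD_sub_pS, sub_self, zero_pow two_ne_zero]

lemma one_sub_pD (i j : ℕ) : 1 - pD i j = (1 - (1/4)^i) * (1 - (1/4)^j) := by
  rw [pD]
  ring

lemma one_div_four_pow_le_one (n : ℕ) : (1/4 : ℝ)^n ≤ 1 :=
  pow_le_one₀ (by norm_num) (by norm_num)

lemma pD_le_one (i j : ℕ) : pD i j ≤ 1 := by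
  rw [← sub_nonneg, one_sub_pD]
  exact mul_nonneg (sub_nonneg.mpr (one_div_four_pow_le_one i))
    (sub_nonneg.mpr (one_div_four_pow_le_one j))

lemma one_div_four_pow_le_pD (i j : ℕ) : (1/4)^i ≤ pD i j := by
  have h : (1/4 : ℝ)^(i+j) ≤ (1/4)^j :=
    pow_le_pow_of_le_one (by norm_num) (by norm_num) (Nat.le_add_left j i)
  rw [pD]
  linarith

lemma pD_nonneg (i j : ℕ) : 0 ≤ pD i j :=
  (by positivity : (0 : ℝ) ≤ (1/4)^i).trans (one_div_four_pow_le_pD i j)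

lemma pS_le_two_mul_one_div_two_pow (i j : ℕ) : pS i j ≤ 2 * (1/2)^(i+j) :=
  sub_le_self _ (by positivity)

lemma two_pow_mul_pS_le_pD {m i j : ℕ} (h : i + m < j) : 2^m * pS i j ≤ pD i j :=
  calc 2^m * pS i j
    _ ≤ 2^m * (2 * (1/2)^(i+j)) := by gcongr; exact pS_le_two_mul_one_div_two_pow i j
    _ ≤ 2^m * (2 * (1/2)^(i + (i + m + 1))) := by
      gcongr 2^m * (2 * ?_)
      exact pow_le_pow_of_le_one (by norm_num) (by norm_num) (by omega)
    _ = (1/4)^i * (2 * (1/2))^(m+1) := by rw [one_div_four_pow, mul_pow]; ring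
    _ = (1/4)^i := by norm_num
    _ ≤ pD i j := one_div_four_pow_le_pD i j

lemma two_pow_mul_pS_mul_one_sub_pD_le {m i j : ℕ} (h : i + m < j) :
    2^m * (pS i j * (1 - pD i j)) ≤ pD i j * (1 - pS i j) :=
  calc 2^m * (pS i j * (1 - pD i j))
    _ = 2^m * pS i j * (1 - pD i j) := (mul_assoc _ _ _).symm
    _ ≤ pD i j * (1 - pD i j) :=
      mul_le_mul_of_nonneg_right (two_pow_mul_pS_le_pD h) (sub_nonneg.mpr (pD_le_one i j))
    _ ≤ pD i j * (1 - pS i j) :=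
      mul_le_mul_of_nonneg_left (sub_le_sub_left (pS_le_pD i j) 1) (pD_nonneg i j)

theorem equality_checker_general (m i j : ℕ) :
    (i = j → pD i j * (1 - pS i j) = pS i j * (1 - pD i j)) ∧
    (i ≠ j → i % (m + 1) = j % (m + 1) →
      2^m * (pS i j * (1 - pD i j)) ≤ pD i j * (1 - pS i j)) := by
  refine ⟨fun hij => ?_, fun hne hmod => ?_⟩
  · rw [hij, pD_self_eq_pS_self]
  · wlog hlt : i < j generalizing i j
    · rw [pD_comm, pS_comm]
      exact this j i hne.symm hmod.symm (hne.lt_or_gt.resolve_left hlt)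
    · exact two_pow_mul_pS_mul_one_sub_pD_le (Nat.ModEq.add_le_of_lt hmod hlt)

/-- Behavior of the Equality Checker: if `i = j` then
`Pr["Different"] = Pr["Same"]`, and if `i ≠ j` with `i ≡ j (mod 12)` then
`Pr["Different"] ≥ 2^11 · Pr["Same"]`, where `Pr["Different"] = pD·(1−pS)` and
`Pr["Same"] = pS·(1−pD)`. -/
theorem equality_checker (i j : ℕ) :
    (i = j → pD i j * (1 - pS i j) = pS i j * (1 - pD i j)) ∧
    (i ≠ j → i % 12 = j % 12 →
      2^11 * (pS i j * (1 - pD i j)) ≤ pD i j * (1 - pS i j)) :=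
  equality_checker_general 11 i j
end

section
/- For all words v₁, w₁, v₂, w₂ over the digit alphabet {1,2}, the 6×6 integer matrices A satisfy the multiplication law A(v₁,w₁)·A(v₂,w₂) = A(v₁v₂, w₁w₂), where v₁v₂ and w₁w₂ denote concatenation. -/
/-- The base-3 value `(v)₃` of a word over the digit alphabet `{1,2}`
(`false` representing the digit `1`, `true` the digit `2`), most significant
digit first. -/
def val3 (v : List Bool) : ℕ :=
  v.foldl (fun a b => 3 * a + (if b then 2 else 1)) 0

/-- The 6×6 integer matrix `A(v,w)` of Claus. -/
def matA (v w : List Bool) : Matrix (Fin 6) (Fin 6) ℤ :=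
  !![1, -2 * (val3 v : ℤ), 2 * (val3 w : ℤ), (val3 v : ℤ)^2, (val3 w : ℤ)^2,
        -2 * (val3 v : ℤ) * (val3 w : ℤ);
     0, 3^v.length, 0, -(val3 v : ℤ) * 3^v.length, 0, (val3 w : ℤ) * 3^v.length;
     0, 0, 3^w.length, 0, (val3 w : ℤ) * 3^w.length, -(val3 v : ℤ) * 3^w.length;
     0, 0, 0, 3^(2 * v.length), 0, 0;
     0, 0, 0, 0, 3^(2 * w.length), 0;
     0, 0, 0, 0, 0, 3^(v.length + w.length)]

/-!
The matrix `A(v,w)` is a symmetric square. The substitution `X ↦ X - (v)₃ Y + (w)₃ Z`,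
`Y ↦ 3^|v| Y`, `Z ↦ 3^|w| Z` acts on the quadratic monomials `X², XY, XZ, Y², Z², YZ`, and the rows
of `A(v,w)` are the coefficients of their images. Symmetric squares are multiplicative, so the
product law reduces to the same law for 3×3 matrices, which is the concatenation rule for base-3
numerals.
-/

theorem val3_eq_ofDigits (v : List Bool) :
    val3 v = Nat.ofDigits 3 (v.map fun b => if b then 2 else 1).reverse := by
  simp [val3, Nat.ofDigits_eq_foldr, List.foldl_map, add_comm]

theorem val3_append (v₁ v₂ : List Bool) :
    val3 (v₁ ++ v₂) = val3 v₁ * 3 ^ v₂.length + val3 v₂ := by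
  simp only [val3_eq_ofDigits, List.map_append, List.reverse_append, Nat.ofDigits_append,
    List.length_reverse, List.length_map]
  ring

section SymSquare

variable {l m n R : Type*} [CommSemiring R]

/-- The symmetric square of a matrix: if `M` sends the variable `xᵢ` to `∑ₖ M i k • yₖ`, then row
`s(i, j)` lists the coefficients of the image of `xᵢ xⱼ` in the monomials `yₖ yₗ`. In this monomial
basis a mixed monomial collects the contributions of both `(k, l)` and `(l, k)`. -/
def symSquare [Fintype n] [DecidableEq n] (M : Matrix m n R) : Matrix (Sym2 m) (Sym2 n) R :=
  Matrix.of fun s t => s.lift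
    ⟨fun i j => ∑ p : n × n with s(p.1, p.2) = t, M i p.1 * M j p.2, fun i j =>
      Finset.sum_equiv (Equiv.prodComm n n) (by simp [Sym2.eq_swap]) (by simp [mul_comm])⟩

theorem symSquare_mk_apply [Fintype n] [DecidableEq n] (M : Matrix m n R) (i j : m) (t : Sym2 n) :
    symSquare M s(i, j) t = ∑ p : n × n with s(p.1, p.2) = t, M i p.1 * M j p.2 :=
  rfl

theorem symSquare_mk_diag [Fintype n] [DecidableEq n] (M : Matrix m n R) (i j : m) (k : n) :
    symSquare M s(i, j) s(k, k) = M i k * M j k := by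
  have fiber : ({p : n × n | s(p.1, p.2) = s(k, k)} : Finset (n × n)) = {(k, k)} := by
    ext ⟨a, b⟩
    simp
  rw [symSquare_mk_apply, fiber, Finset.sum_singleton]

theorem symSquare_mk_of_ne [Fintype n] [DecidableEq n] (M : Matrix m n R) (i j : m) {k l : n}
    (hkl : k ≠ l) : symSquare M s(i, j) s(k, l) = M i k * M j l + M i l * M j k := by
  have fiber : ({p : n × n | s(p.1, p.2) = s(k, l)} : Finset (n × n)) = {(k, l), (l, k)} := by
    ext ⟨a, b⟩
    simp
  rw [symSquare_mk_apply, fiber, Finset.sum_pair (by simp [hkl])]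

theorem symSquare_mul [Fintype m] [DecidableEq m] [Fintype n] [DecidableEq n]
    (M : Matrix l m R) (N : Matrix m n R) :
    symSquare (M * N) = symSquare M * symSquare N := by
  ext s t
  induction s with | _ i j
  calc symSquare (M * N) s(i, j) t
      = ∑ q : n × n with s(q.1, q.2) = t, ∑ p : m × m,
          M i p.1 * M j p.2 * (N p.1 q.1 * N p.2 q.2) := by
        simp only [symSquare_mk_apply, Matrix.mul_apply, Finset.sum_mul_sum,
          Fintype.sum_prod_type, mul_mul_mul_comm]
    _ = ∑ p : m × m, M i p.1 * M j p.2 * symSquare N s(p.1, p.2) t := by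
        rw [Finset.sum_comm]
        simp only [symSquare_mk_apply, Finset.mul_sum]
    _ = ∑ r : Sym2 m, ∑ p : m × m with s(p.1, p.2) = r,
          M i p.1 * M j p.2 * symSquare N s(p.1, p.2) t :=
        (Finset.sum_fiberwise _ _ _).symm
    _ = (symSquare M * symSquare N) s(i, j) t := by
        simp only [Matrix.mul_apply, symSquare_mk_apply M, Finset.sum_mul]
        refine Finset.sum_congr rfl fun r _ => Finset.sum_congr rfl fun p hp => ?_
        rw [(Finset.mem_filter.mp hp).2]

end SymSquare

/-- The substitution `X ↦ X - (v)₃ Y + (w)₃ Z`, `Y ↦ 3^|v| Y`, `Z ↦ 3^|w| Z`, each row holding the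
image of one variable; the matrix `A(v,w)` is its symmetric square. -/
def wordMatrix (v w : List Bool) : Matrix (Fin 3) (Fin 3) ℤ :=
  !![1, -(val3 v : ℤ), (val3 w : ℤ);
     0, 3 ^ v.length, 0;
     0, 0, 3 ^ w.length]

theorem wordMatrix_mul (v₁ w₁ v₂ w₂ : List Bool) :
    wordMatrix v₁ w₁ * wordMatrix v₂ w₂ = wordMatrix (v₁ ++ v₂) (w₁ ++ w₂) := by
  simp [wordMatrix, val3_append, pow_add, add_comm]

/-- The order `X², XY, XZ, Y², Z², YZ` of the quadratic monomials in which `A(v,w)` is written. -/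
noncomputable def quadraticMonomialEquiv : Fin 6 ≃ Sym2 (Fin 3) :=
  Equiv.ofBijective ![s(0, 0), s(0, 1), s(0, 2), s(1, 1), s(2, 2), s(1, 2)] (by decide)

theorem matA_eq_symSquare (v w : List Bool) :
    matA v w =
      (symSquare (wordMatrix v w)).submatrix quadraticMonomialEquiv quadraticMonomialEquiv := by
  ext i j
  fin_cases i <;> fin_cases j <;>
    simp [matA, wordMatrix, quadraticMonomialEquiv, symSquare_mk_diag, symSquare_mk_of_ne] <;> ring

/-- The multiplication law `A(v₁,w₁)·A(v₂,w₂) = A(v₁v₂, w₁w₂)`. -/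
theorem matA_mul (v₁ w₁ v₂ w₂ : List Bool) :
    matA v₁ w₁ * matA v₂ w₂ = matA (v₁ ++ v₂) (w₁ ++ w₂) := by
  simp only [matA_eq_symSquare, Matrix.submatrix_mul_equiv, ← symSquare_mul, wordMatrix_mul]
end

section
/- For all words v, w over the digit alphabet {1,2}, with e₁ = (1,0,0,0,0,0) and f₁ = (1,0,0,−1,−1,−1), one has e₁ᵀ·A(v,w)·f₁ = 1 − ((v)₃ − (w)₃)²; consequently e₁ᵀ·A(v,w)·f₁ > 0 if and only if v = w. -/
/-!
Only the first row of `A(v,w)` enters the product, and paired with `f₁` it gives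
`1 - x² - y² + 2xy = 1 - (x - y)²` at `x = (v)₃`, `y = (w)₃`. An integer `1 - d²` is positive only
for `d = 0`, so positivity means `(v)₃ = (w)₃`. Since the digit `0` never occurs, a word has no
leading zeros, so it is the ternary expansion of its value and can be read off from it.
-/

open Matrix

/-- The starting vector `e₁`. -/
def e₁ : Fin 6 → ℤ := ![1, 0, 0, 0, 0, 0]

/-- The ending vector `f₁`. -/
def f₁ : Fin 6 → ℤ := ![1, 0, 0, -1, -1, -1]

section WordValue

variable {α : Type*} {k : ℕ} {d : α → ℕ}

/-- The value of a word as a base-`k` numeral, most significant digit first, when the letter `b`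
stands for the digit `d b`; `val3` is the case `k = 3` of the digits `1` and `2`. -/
def wordValue (k : ℕ) (d : α → ℕ) (v : List α) : ℕ :=
  v.foldl (fun a b => k * a + d b) 0

theorem wordValue_eq_ofDigits (k : ℕ) (d : α → ℕ) (v : List α) :
    wordValue k d v = Nat.ofDigits k (v.map d).reverse := by
  simp [wordValue, Nat.ofDigits_eq_foldr, List.foldl_map, add_comm]

theorem digits_wordValue (hk : 1 < k) (hd_lt : ∀ b, d b < k) (hd_ne_zero : ∀ b, d b ≠ 0)
    (v : List α) : Nat.digits k (wordValue k d v) = (v.map d).reverse := by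
  rw [wordValue_eq_ofDigits]
  apply Nat.digits_ofDigits k hk
  · simp only [List.mem_reverse, List.forall_mem_map, hd_lt, implies_true]
  · simp [hd_ne_zero]

theorem wordValue_injective (hk : 1 < k) (hd : Function.Injective d) (hd_lt : ∀ b, d b < k)
    (hd_ne_zero : ∀ b, d b ≠ 0) : Function.Injective (wordValue k d) := by
  intro v w h
  have hdigits : (v.map d).reverse = (w.map d).reverse := by
    rw [← digits_wordValue hk hd_lt hd_ne_zero, h, digits_wordValue hk hd_lt hd_ne_zero]
  exact hd.list_map (List.reverse_injective hdigits)

end WordValue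

theorem val3_injective : Function.Injective val3 :=
  wordValue_injective (k := 3) (d := fun b : Bool => if b then 2 else 1)
    (by decide) (by decide) (by decide) (by decide)

theorem e₁_dotProduct (x : Fin 6 → ℤ) : e₁ ⬝ᵥ x = x 0 := by
  simp [e₁, vecHead]

theorem matA_mulVec_f₁_zero (v w : List Bool) :
    (matA v w *ᵥ f₁) 0 = 1 - ((val3 v : ℤ) - (val3 w : ℤ)) ^ 2 := by
  calc (matA v w *ᵥ f₁) 0
    _ = 1 + (-(val3 v : ℤ) ^ 2 + (-(val3 w : ℤ) ^ 2 + 2 * (val3 v : ℤ) * (val3 w : ℤ))) := by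
      simp [matA, f₁]
    _ = 1 - ((val3 v : ℤ) - (val3 w : ℤ)) ^ 2 := by ring

theorem one_sub_sq_pos_iff {d : ℤ} : 0 < 1 - d ^ 2 ↔ d = 0 := by
  rw [sub_pos, sq_lt_one_iff_abs_lt_one, Int.abs_lt_one_iff]

/-- `e₁ᵀ·A(v,w)·f₁ = 1 − ((v)₃ − (w)₃)²`, and this is positive iff `v = w`. -/
theorem matA_equality_test (v w : List Bool) :
    e₁ ⬝ᵥ (matA v w *ᵥ f₁) = 1 - ((val3 v : ℤ) - (val3 w : ℤ))^2 ∧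
    (0 < e₁ ⬝ᵥ (matA v w *ᵥ f₁) ↔ v = w) := by
  have hvalue : e₁ ⬝ᵥ (matA v w *ᵥ f₁) = 1 - ((val3 v : ℤ) - (val3 w : ℤ)) ^ 2 := by
    rw [e₁_dotProduct, matA_mulVec_f₁_zero]
  refine ⟨hvalue, ?_⟩
  calc 0 < e₁ ⬝ᵥ (matA v w *ᵥ f₁)
    _ ↔ (val3 v : ℤ) - (val3 w : ℤ) = 0 := by rw [hvalue, one_sub_sq_pos_iff]
    _ ↔ val3 v = val3 w := by rw [sub_eq_zero, Nat.cast_inj]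
    _ ↔ v = w := val3_injective.eq_iff
end

section
/- For all words v₁, w₁, v₂, w₂ over the digit alphabet {1,2}, the 6×6 integer matrices Ã satisfy the multiplication law with reversed concatenation: Ã(v₁,w₁)·Ã(v₂,w₂) = Ã(v₂v₁, w₂w₁). -/
/-- The 6×6 integer matrix `Ã(v,w)` (Hirvensalo's variant). -/
def matAt (v w : List Bool) : Matrix (Fin 6) (Fin 6) ℤ :=
  !![3^(v.length + w.length), 0, 0, -(val3 v : ℤ) * 3^w.length,
        (val3 w : ℤ) * 3^v.length, -2 * (val3 v : ℤ) * (val3 w : ℤ);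
     0, 3^(2 * w.length), 0, (val3 w : ℤ) * 3^w.length, 0, (val3 w : ℤ)^2;
     0, 0, 3^(2 * v.length), 0, -(val3 v : ℤ) * 3^v.length, (val3 v : ℤ)^2;
     0, 0, 0, 3^w.length, 0, 2 * (val3 w : ℤ);
     0, 0, 0, 0, 3^v.length, -2 * (val3 v : ℤ);
     0, 0, 0, 0, 0, 1]

/-- The value of the base-3 numeral obtained by appending the digits of `v`, encoded as in `val3`,
to a numeral of value `x`, so that `val3 v` is its value at `x = 0`. -/
def appendDigits {R : Type*} [Semiring R] (v : List Bool) (x : R) : R :=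
  v.foldl (fun a b => 3 * a + (if b then 2 else 1)) x

theorem appendDigits_append {R : Type*} [Semiring R] (v w : List Bool) (x : R) :
    appendDigits (v ++ w) x = appendDigits w (appendDigits v x) :=
  List.foldl_append

theorem appendDigits_eq {R : Type*} [Semiring R] (v : List Bool) (x : R) :
    appendDigits v x = 3 ^ v.length * x + val3 v := by
  induction v using List.reverseRecOn with
  | nil => simp [appendDigits, val3]
  | append_singleton v b ih =>
    have val3_concat : val3 (v ++ [b]) = 3 * val3 v + (if b then 2 else 1) := by
      simp only [val3, List.foldl_append, List.foldl_cons, List.foldl_nil]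
    calc appendDigits (v ++ [b]) x
        = 3 * appendDigits v x + (if b then 2 else 1) := appendDigits_append v [b] x
      _ = 3 ^ (v ++ [b]).length * x + val3 (v ++ [b]) := by
        rw [ih, val3_concat, List.length_append, List.length_singleton, pow_succ']
        push_cast
        rw [mul_add, mul_assoc, add_assoc]

/-- The polynomials of degree at most two in `x` and `y` on which `matAt` acts. The coefficients
`±2` normalize them so that their transformation matrix is exactly `matAt`. -/
def quadraticVec {R : Type*} [CommRing R] (x y : R) : Fin 6 → R :=
  ![-2 * x * y, y ^ 2, x ^ 2, 2 * y, -2 * x, 1]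

theorem matAt_mulVec_quadraticVec (v w : List Bool) (x y : ℤ) :
    (matAt v w).mulVec (quadraticVec x y) =
      quadraticVec (appendDigits v x) (appendDigits w y) := by
  rw [appendDigits_eq, appendDigits_eq]
  simp only [matAt, quadraticVec, Matrix.cons_mulVec, Matrix.empty_mulVec,
    Matrix.cons_dotProduct_cons, Matrix.dotProduct_of_isEmpty, Matrix.vecCons_inj, and_true]
  refine ⟨?_, ?_, ?_, ?_, ?_, ?_⟩ <;> ring

theorem eq_zero_of_forall_dotProduct_quadraticVec {R : Type*} [CommRing R]
    (two_regular : IsLeftRegular (2 : R)) {c : Fin 6 → R}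
    (h : ∀ x y, c ⬝ᵥ quadraticVec x y = 0) : c = 0 := by
  have expand (x y : R) : c 0 * (-2 * x * y) + c 1 * y ^ 2 + c 2 * x ^ 2 + c 3 * (2 * y) +
      c 4 * (-2 * x) + c 5 = 0 := by
    simpa [quadraticVec, dotProduct, Fin.sum_univ_six] using h x y
  have cancel_two {a : R} (ha : 2 * a = 0) : a = 0 := two_regular (by simpa using ha)
  have c5 : c 5 = 0 := by linear_combination expand 0 0
  have c2 : c 2 = 0 := cancel_two (by linear_combination expand 1 0 + expand (-1) 0 - 2 * c5)
  have c1 : c 1 = 0 := cancel_two (by linear_combination expand 0 1 + expand 0 (-1) - 2 * c5)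
  have c4 : c 4 = 0 := cancel_two (by linear_combination expand (-1) 0 - c2 - c5)
  have c3 : c 3 = 0 := cancel_two (by linear_combination expand 0 1 - c1 - c5)
  have c0 : c 0 = 0 := cancel_two (by
    linear_combination c1 + c2 + 2 * c3 - 2 * c4 + c5 - expand 1 1)
  ext i
  fin_cases i <;> assumption

theorem matrix_ext_of_mulVec_quadraticVec {R m : Type*} [CommRing R]
    (two_regular : IsLeftRegular (2 : R)) {M N : Matrix m (Fin 6) R}
    (h : ∀ x y, M.mulVec (quadraticVec x y) = N.mulVec (quadraticVec x y)) : M = N := by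
  have row_eq (i : m) : M i = N i := by
    refine sub_eq_zero.mp (eq_zero_of_forall_dotProduct_quadraticVec two_regular fun x y => ?_)
    rw [sub_dotProduct, sub_eq_zero]
    exact congrFun (h x y) i
  exact funext row_eq

/-- The multiplication law with reversed concatenation:
`Ã(v₁,w₁)·Ã(v₂,w₂) = Ã(v₂v₁, w₂w₁)`. -/
theorem matAt_mul (v₁ w₁ v₂ w₂ : List Bool) :
    matAt v₁ w₁ * matAt v₂ w₂ = matAt (v₂ ++ v₁) (w₂ ++ w₁) := by
  refine matrix_ext_of_mulVec_quadraticVec (IsRegular.of_ne_zero two_ne_zero).left fun x y => ?_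
  rw [← Matrix.mulVec_mulVec]
  simp only [matAt_mulVec_quadraticVec, appendDigits_append]
end

section
/- Let k > 2, let M₁, …, M_k be d×d real matrices, and let τ encode the alphabet {1,…,k} over {a,b} by the prefix-free code τ(i) = a^{i−1}b for 1 ≤ i ≤ k−1 and τ(k) = a^{k−1}, extended to words by concatenation. Define the (k−1)d×(k−1)d block matrices M'_a (block (i, i+1) equal to the d×d identity for 0 ≤ i ≤ k−3, block (k−2, 0) equal to M_k, all other blocks zero) and M'_b (block (i, 0) equal to M_{i+1} for 0 ≤ i ≤ k−2, all other blocks zero). For vectors π, η of length d, let π' and η' be the vectors of length (k−1)d that carry π respectively η in block 0 and zeros elsewhere. Then: (a) for every word u over {1,…,k}, π'ᵀ·(∏_{c ∈ τ(u)} M'_c)·η' = πᵀ·(∏_{σ ∈ u} M_σ)·η, where both products are taken in the order in which the letters are read; and (b) for every word x over {a,b} that is not of the form τ(u) for any word u, π'ᵀ·(∏_{c ∈ x} M'_c)·η' = 0. -/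
/-!
Every binary word has the form `τ(u) a^j` with `j ≤ k - 2`: the letters `u` are those already
decoded, and `a^j` is an unfinished codeword. Each block row of `M'_a` and `M'_b` has at most one
nonzero block, so reading the word moves `π'` from block to block without ever spreading it out:
the resulting row vector carries `πᵀ · ∏_{σ ∈ u} M_σ` in block `j` and zeros elsewhere. Pairing
with `η'` keeps this value when `j = 0`, that is, when the word is `τ(u)`, and gives `0` otherwise.
-/

open Matrix

/-- The prefix-free code `τ` on the alphabet `{1,…,k}` (represented by `Fin k`,
with `i : Fin k` standing for the letter `i+1`): `τ(i) = a^{i-1}b` for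
`1 ≤ i ≤ k-1` and `τ(k) = a^{k-1}`, where `a = false` and `b = true`. -/
def tauCode (k : ℕ) (i : Fin k) : List Bool :=
  if i.val = k - 1 then List.replicate (k - 1) false
  else List.replicate i.val false ++ [true]

/-- `τ` extended to words by concatenation. -/
def tauWord (k : ℕ) (u : List (Fin k)) : List Bool := (u.map (tauCode k)).flatten

/-- The block matrix `M'_a`: block `(i, i+1)` is the identity for `0 ≤ i ≤ k-3`,
block `(k-2, 0)` is `M_k`, all other blocks are zero. -/
def Mblock_a (k d : ℕ) (hk : 2 < k) (M : Fin k → Matrix (Fin d) (Fin d) ℝ) :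
    Matrix (Fin (k - 1) × Fin d) (Fin (k - 1) × Fin d) ℝ :=
  Matrix.of fun x y =>
    if x.1.val = k - 2 then
      (if y.1.val = 0 then M ⟨k - 1, by omega⟩ x.2 y.2 else 0)
    else
      (if y.1.val = x.1.val + 1 ∧ x.2 = y.2 then 1 else 0)

/-- The block matrix `M'_b`: block `(i, 0)` is `M_{i+1}` for `0 ≤ i ≤ k-2`,
all other blocks are zero. -/
def Mblock_b (k d : ℕ) (M : Fin k → Matrix (Fin d) (Fin d) ℝ) :
    Matrix (Fin (k - 1) × Fin d) (Fin (k - 1) × Fin d) ℝ :=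
  Matrix.of fun x y =>
    if y.1.val = 0 then M (Fin.castLE (Nat.sub_le k 1) x.1) x.2 y.2 else 0

/-- The transition matrix of the binary automaton for the letter `c ∈ {a,b}`. -/
def Mblock (k d : ℕ) (hk : 2 < k) (M : Fin k → Matrix (Fin d) (Fin d) ℝ)
    (c : Bool) : Matrix (Fin (k - 1) × Fin d) (Fin (k - 1) × Fin d) ℝ :=
  if c then Mblock_b k d M else Mblock_a k d hk M

/-- A vector of length `d` placed in block `0` of the `(k-1)·d`-dimensional space,
with zeros elsewhere. -/
def liftVec (k d : ℕ) (v : Fin d → ℝ) : Fin (k - 1) × Fin d → ℝ :=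
  fun x => if x.1.val = 0 then v x.2 else 0

section BlockVec

variable {ι κ m p R : Type*} [DecidableEq ι]

/-- The block vector, with blocks indexed by `ι`, that carries `v` in block `i` and zeros elsewhere.
For `ι = Fin (k - 1)` it is the state of the binary automaton after reading the first `i` letters
of an unfinished codeword. -/
def blockVec [Zero R] (i : ι) (v : m → R) : ι × m → R :=
  Function.uncurry (Pi.single i v)

variable [Fintype ι] [Fintype m]

theorem blockVec_dotProduct [NonUnitalNonAssocSemiring R] (i : ι) (v : m → R) (w : ι × m → R) :
    blockVec i v ⬝ᵥ w = v ⬝ᵥ fun s => w (i, s) := by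
  simp only [dotProduct, blockVec, Fintype.sum_prod_type, Function.uncurry_apply_pair]
  rw [Fintype.sum_eq_single i fun j hj => by simp [hj], Pi.single_eq_same]

theorem blockVec_dotProduct_blockVec_same [NonUnitalNonAssocSemiring R] (i : ι) (v w : m → R) :
    blockVec i v ⬝ᵥ blockVec i w = v ⬝ᵥ w := by
  rw [blockVec_dotProduct]
  simp [blockVec]

theorem blockVec_dotProduct_blockVec_of_ne [NonUnitalNonAssocSemiring R] {i j : ι} (h : i ≠ j)
    (v w : m → R) : blockVec i v ⬝ᵥ blockVec j w = 0 := by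
  rw [blockVec_dotProduct]
  simp [blockVec, h, dotProduct]

theorem blockVec_vecMul_comp_of [NonUnitalNonAssocSemiring R] (i : ι) (v : m → R)
    (B : ι → κ → Matrix m p R) :
    blockVec i v ᵥ* comp ι κ m p R (of B) = Function.uncurry fun j => v ᵥ* B i j :=
  funext fun _ => blockVec_dotProduct i v _

theorem blockVec_vecMul_comp_of_eq_single [DecidableEq κ] [NonUnitalNonAssocSemiring R]
    {B : ι → κ → Matrix m p R} {i : ι} {j : κ} {A : Matrix m p R} (hB : B i = Pi.single j A)
    (v : m → R) : blockVec i v ᵥ* comp ι κ m p R (of B) = blockVec j (v ᵥ* A) := by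
  rw [blockVec_vecMul_comp_of, hB, blockVec]
  exact congrArg Function.uncurry <| funext fun l =>
    Pi.apply_single (fun _ => (v ᵥ* ·)) (fun _ => vecMul_zero v) j A l

end BlockVec

section Code

variable {n : ℕ}

theorem tauCode_castSucc (i : Fin (n + 1)) :
    tauCode (n + 2) i.castSucc = List.replicate i false ++ [true] := by
  simp [tauCode, i.isLt.ne]

theorem tauCode_last : tauCode (n + 2) (Fin.last (n + 1)) = List.replicate (n + 1) false := by
  simp [tauCode]

theorem tauWord_cons (k : ℕ) (i : Fin k) (u : List (Fin k)) :
    tauWord k (i :: u) = tauCode k i ++ tauWord k u := by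
  simp [tauWord]

theorem tauWord_append (k : ℕ) (u w : List (Fin k)) :
    tauWord k (u ++ w) = tauWord k u ++ tauWord k w := by
  simp [tauWord]

theorem tauWord_singleton (k : ℕ) (i : Fin k) : tauWord k [i] = tauCode k i := by
  simp [tauWord]

theorem exists_eq_tauWord_append_replicate (x : List Bool) :
    ∃ (u : List (Fin (n + 2))) (j : Fin (n + 1)),
      x = tauWord (n + 2) u ++ List.replicate j false := by
  induction x using List.reverseRecOn with
  | nil => exact ⟨[], 0, rfl⟩
  | append_singleton x c ih =>
    obtain ⟨u, j, rfl⟩ := ih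
    cases c with
    | true =>
      exact ⟨u ++ [j.castSucc], 0, by
        simp [tauWord_append, tauWord_singleton, tauCode_castSucc]⟩
    | false =>
      cases j using Fin.lastCases with
      | last =>
        exact ⟨u ++ [Fin.last (n + 1)], 0, by
          simp [tauWord_append, tauWord_singleton, tauCode_last, List.replicate_succ']⟩
      | cast i => exact ⟨u, i.succ, by simp [List.replicate_succ']⟩

end Code

section TransitionMatrix

variable {m R : Type*} [DecidableEq m] [Zero R] [One R] {n : ℕ}

/-- The block rows of `M'_a` (at `false`) and `M'_b` (at `true`) for `k = n + 2` letters. -/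
def transitionRow (M : Fin (n + 2) → Matrix m m R) :
    Bool → Fin (n + 1) → Fin (n + 1) → Matrix m m R
  | false => Fin.snoc (fun i : Fin n => Pi.single i.succ 1) (Pi.single 0 (M (Fin.last (n + 1))))
  | true => fun i => Pi.single 0 (M i.castSucc)

theorem transitionRow_false_last (M : Fin (n + 2) → Matrix m m R) :
    transitionRow M false (Fin.last n) = Pi.single 0 (M (Fin.last (n + 1))) := by
  simp [transitionRow]

theorem transitionRow_false_castSucc (M : Fin (n + 2) → Matrix m m R) (i : Fin n) :
    transitionRow M false i.castSucc = Pi.single i.succ 1 := by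
  simp [transitionRow]

theorem transitionRow_true (M : Fin (n + 2) → Matrix m m R) (i : Fin (n + 1)) :
    transitionRow M true i = Pi.single 0 (M i.castSucc) :=
  rfl

/-- The transition matrix of the binary automaton for a letter, with the block rows
`transitionRow` flattened into a single matrix of scalars. -/
def transitionMatrix (M : Fin (n + 2) → Matrix m m R) (c : Bool) :
    Matrix (Fin (n + 1) × m) (Fin (n + 1) × m) R :=
  comp _ _ _ _ R (of (transitionRow M c))

end TransitionMatrix

section Automaton

variable {m R : Type*} [Fintype m] [DecidableEq m] [Semiring R] {n : ℕ}

theorem blockVec_vecMul_transitionMatrix_true (M : Fin (n + 2) → Matrix m m R) (i : Fin (n + 1))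
    (v : m → R) :
    blockVec i v ᵥ* transitionMatrix M true = blockVec 0 (v ᵥ* M i.castSucc) :=
  blockVec_vecMul_comp_of_eq_single (transitionRow_true M i) v

theorem blockVec_last_vecMul_transitionMatrix_false (M : Fin (n + 2) → Matrix m m R) (v : m → R) :
    blockVec (Fin.last n) v ᵥ* transitionMatrix M false =
      blockVec 0 (v ᵥ* M (Fin.last (n + 1))) :=
  blockVec_vecMul_comp_of_eq_single (transitionRow_false_last M) v

theorem blockVec_castSucc_vecMul_transitionMatrix_false (M : Fin (n + 2) → Matrix m m R)
    (i : Fin n) (v : m → R) :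
    blockVec i.castSucc v ᵥ* transitionMatrix M false = blockVec i.succ v := by
  rw [transitionMatrix,
    blockVec_vecMul_comp_of_eq_single (transitionRow_false_castSucc M i), vecMul_one]

theorem blockVec_zero_vecMul_transitionMatrix_false_pow (M : Fin (n + 2) → Matrix m m R)
    (j : Fin (n + 1)) (v : m → R) :
    blockVec 0 v ᵥ* transitionMatrix M false ^ (j : ℕ) = blockVec j v := by
  induction j using Fin.induction with
  | zero => simp
  | succ i ih =>
    rw [Fin.val_succ, pow_succ, ← vecMul_vecMul, ← Fin.val_castSucc, ih,
      blockVec_castSucc_vecMul_transitionMatrix_false]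

theorem blockVec_zero_vecMul_prod_tauCode (M : Fin (n + 2) → Matrix m m R) (i : Fin (n + 2))
    (v : m → R) :
    blockVec 0 v ᵥ* ((tauCode (n + 2) i).map (transitionMatrix M)).prod =
      blockVec 0 (v ᵥ* M i) := by
  cases i using Fin.lastCases with
  | last =>
    have hpow : blockVec 0 v ᵥ* transitionMatrix M false ^ n = blockVec (Fin.last n) v :=
      blockVec_zero_vecMul_transitionMatrix_false_pow M (Fin.last n) v
    rw [tauCode_last, List.map_replicate, List.prod_replicate, pow_succ, ← vecMul_vecMul, hpow,
      blockVec_last_vecMul_transitionMatrix_false]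
  | cast i =>
    rw [tauCode_castSucc, List.map_append, List.prod_append, List.map_replicate,
      List.prod_replicate, List.map_singleton, List.prod_singleton, ← vecMul_vecMul,
      blockVec_zero_vecMul_transitionMatrix_false_pow, blockVec_vecMul_transitionMatrix_true]

theorem blockVec_zero_vecMul_prod_tauWord (M : Fin (n + 2) → Matrix m m R)
    (u : List (Fin (n + 2))) (v : m → R) :
    blockVec 0 v ᵥ* ((tauWord (n + 2) u).map (transitionMatrix M)).prod =
      blockVec 0 (v ᵥ* (u.map M).prod) := by
  induction u generalizing v with
  | nil => simp [tauWord]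
  | cons i u ih =>
    rw [tauWord_cons, List.map_append, List.prod_append, ← vecMul_vecMul,
      blockVec_zero_vecMul_prod_tauCode, ih, List.map_cons, List.prod_cons, vecMul_vecMul]

theorem blockVec_zero_vecMul_prod_tauWord_append_replicate (M : Fin (n + 2) → Matrix m m R)
    (u : List (Fin (n + 2))) (j : Fin (n + 1)) (v : m → R) :
    blockVec 0 v ᵥ*
        ((tauWord (n + 2) u ++ List.replicate j false).map (transitionMatrix M)).prod =
      blockVec j (v ᵥ* (u.map M).prod) := by
  rw [List.map_append, List.prod_append, ← vecMul_vecMul, blockVec_zero_vecMul_prod_tauWord,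
    List.map_replicate, List.prod_replicate, blockVec_zero_vecMul_transitionMatrix_false_pow]

theorem binary_coding_general (M : Fin (n + 2) → Matrix m m R) (π η : m → R) :
    (∀ u : List (Fin (n + 2)),
      blockVec 0 π ⬝ᵥ
          (((tauWord (n + 2) u).map (transitionMatrix M)).prod *ᵥ blockVec 0 η) =
        π ⬝ᵥ ((u.map M).prod *ᵥ η)) ∧
    (∀ x : List Bool, (∀ u : List (Fin (n + 2)), x ≠ tauWord (n + 2) u) →
      blockVec 0 π ⬝ᵥ ((x.map (transitionMatrix M)).prod *ᵥ blockVec 0 η) = 0) := by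
  refine ⟨fun u => ?_, fun x hx => ?_⟩
  · rw [dotProduct_mulVec, blockVec_zero_vecMul_prod_tauWord, blockVec_dotProduct_blockVec_same,
      dotProduct_mulVec]
  · obtain ⟨u, j, rfl⟩ := exists_eq_tauWord_append_replicate (n := n) x
    have hj : j ≠ 0 := by
      rintro rfl
      exact hx u (List.append_nil _)
    rw [dotProduct_mulVec, blockVec_zero_vecMul_prod_tauWord_append_replicate,
      blockVec_dotProduct_blockVec_of_ne hj]

end Automaton

theorem liftVec_eq_blockVec (n d : ℕ) (v : Fin d → ℝ) :
    liftVec (n + 2) d v = blockVec (0 : Fin (n + 1)) v := by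
  funext ⟨(i : Fin (n + 1)), s⟩
  by_cases hi : i = 0 <;> simp [liftVec, blockVec, hi]

theorem Mblock_a_eq_transitionMatrix {n d : ℕ} (hk : 2 < n + 2)
    (M : Fin (n + 2) → Matrix (Fin d) (Fin d) ℝ) :
    Mblock_a (n + 2) d hk M = transitionMatrix M false := by
  ext ⟨(i : Fin (n + 1)), s⟩ ⟨(j : Fin (n + 1)), t⟩
  rw [transitionMatrix, comp_apply, of_apply]
  cases i using Fin.lastCases with
  | last =>
    rw [transitionRow_false_last]
    by_cases hj : j = 0 <;> simp [Mblock_a, Fin.last, hj]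
  | cast i =>
    rw [transitionRow_false_castSucc]
    by_cases hj : j = i.succ
    · subst hj
      simp [Mblock_a, i.isLt.ne, one_apply]
    · have hval : (j : ℕ) ≠ i + 1 := fun h => hj (Fin.ext h)
      simp [Mblock_a, i.isLt.ne, hj, hval]

theorem Mblock_b_eq_transitionMatrix (n d : ℕ) (M : Fin (n + 2) → Matrix (Fin d) (Fin d) ℝ) :
    Mblock_b (n + 2) d M = transitionMatrix M true := by
  ext ⟨(i : Fin (n + 1)), s⟩ ⟨(j : Fin (n + 1)), t⟩
  rw [transitionMatrix, comp_apply, of_apply, transitionRow_true]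
  by_cases hj : j = 0 <;> simp [Mblock_b, Fin.castSucc, Fin.castAdd, hj]

theorem Mblock_eq_transitionMatrix {n d : ℕ} (hk : 2 < n + 2)
    (M : Fin (n + 2) → Matrix (Fin d) (Fin d) ℝ) :
    Mblock (n + 2) d hk M = transitionMatrix M := by
  funext c
  cases c with
  | false => exact Mblock_a_eq_transitionMatrix hk M
  | true => exact Mblock_b_eq_transitionMatrix n d M

/-- Reduction of a `k`-letter alphabet (`k > 2`) to the binary alphabet `{a,b}`:
(a) for every word `u` over `{1,…,k}`,
`π'ᵀ·(∏_{c ∈ τ(u)} M'_c)·η' = πᵀ·(∏_{σ ∈ u} M_σ)·η`, both products taken in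
reading order; and (b) every word `x` over `{a,b}` that is not of the form `τ(u)`
yields `π'ᵀ·(∏_{c ∈ x} M'_c)·η' = 0`. -/
theorem binary_coding (k d : ℕ) (hk : 2 < k)
    (M : Fin k → Matrix (Fin d) (Fin d) ℝ) (π η : Fin d → ℝ) :
    (∀ u : List (Fin k),
      liftVec k d π ⬝ᵥ
          (((tauWord k u).map (Mblock k d hk M)).prod *ᵥ liftVec k d η)
        = π ⬝ᵥ ((u.map M).prod *ᵥ η)) ∧
    (∀ x : List Bool, (∀ u : List (Fin k), x ≠ tauWord k u) →
      liftVec k d π ⬝ᵥ ((x.map (Mblock k d hk M)).prod *ᵥ liftVec k d η) = 0) := by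
  obtain ⟨n, rfl⟩ := Nat.exists_eq_add_of_le' hk.le
  simpa only [liftVec_eq_blockVec, Mblock_eq_transitionMatrix] using binary_coding_general M π η
end

section
/- For every real number x with 0 ≤ x ≤ 1 and x ≠ 1/2, the sequence (1 − (1/2)·xⁿ − (1/2)·(1−x)ⁿ)^{2ⁿ} converges to 0 as n → ∞. -/
open Filter

/-! If `pₙ` is the probability that a round decides, then `1 - pₙ ≤ exp (-pₙ)`, so `kₙ` rounds
leave indecision with probability at most `exp (-kₙ pₙ)`. Here `kₙ = 2ⁿ` and
`kₙ pₙ = ((2x)ⁿ + (2(1 - x))ⁿ) / 2` tends to infinity because `2x` and `2(1 - x)` are distinct with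
sum `2`, so one of them exceeds `1`. -/

theorem one_sub_pow_le_exp_neg_mul {p : ℝ} (hp : p ≤ 1) (k : ℕ) :
    (1 - p) ^ k ≤ Real.exp (-(k * p)) :=
  calc (1 - p) ^ k
      ≤ Real.exp (-p) ^ k := pow_le_pow_left₀ (sub_nonneg.2 hp) (Real.one_sub_le_exp_neg p) k
    _ = Real.exp (-(k * p)) := by rw [← Real.exp_nat_mul, mul_neg]

theorem tendsto_one_sub_pow_nhds_zero_of_tendsto_mul_atTop {ι : Type*} {l : Filter ι} {p : ι → ℝ}
    {k : ι → ℕ} (hp : ∀ᶠ i in l, p i ≤ 1) (hkp : Tendsto (fun i => k i * p i) l atTop) :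
    Tendsto (fun i => (1 - p i) ^ k i) l (nhds 0) := by
  refine squeeze_zero' ?_ ?_ (Real.tendsto_exp_neg_atTop_nhds_zero.comp hkp)
  · filter_upwards [hp] with i hi using pow_nonneg (sub_nonneg.2 hi) _
  · filter_upwards [hp] with i hi using one_sub_pow_le_exp_neg_mul hi _

theorem tendsto_pow_add_pow_atTop {R : Type*} [Semiring R] [LinearOrder R] [IsStrictOrderedRing R]
    [ExistsAddOfLE R] [Archimedean R] {a b : R} (ha : 0 ≤ a) (hb : 0 ≤ b) (hab : 1 < max a b) :
    Tendsto (fun n : ℕ => a ^ n + b ^ n) atTop atTop := by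
  refine tendsto_atTop_mono (fun n => ?_) (tendsto_pow_atTop_atTop_of_one_lt hab)
  rcases max_choice a b with h | h <;> rw [h]
  · exact le_add_of_nonneg_right (pow_nonneg hb n)
  · exact le_add_of_nonneg_left (pow_nonneg ha n)

/-- For `0 ≤ x ≤ 1` with `x ≠ 1/2`, the probability
`(1 − ½·xⁿ − ½·(1−x)ⁿ)^{2ⁿ}` of continued indecision over `2ⁿ` rounds tends
to `0` as `n → ∞`. -/
theorem indecision_tendsto_zero (x : ℝ) (h0 : 0 ≤ x) (h1 : x ≤ 1)
    (hx : x ≠ 1 / 2) :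
    Tendsto (fun n : ℕ => (1 - (1/2) * x^n - (1/2) * (1 - x)^n) ^ (2^n))
      atTop (nhds 0) := by
  have h0' : 0 ≤ 1 - x := sub_nonneg.2 h1
  have hmax : 1 < max (2 * x) (2 * (1 - x)) := by
    rcases hx.lt_or_gt with h | h
    · exact lt_max_of_lt_right (by linarith)
    · exact lt_max_of_lt_left (by linarith)
  have decision_prob_le_one (n : ℕ) : (1/2) * x^n + (1/2) * (1 - x)^n ≤ 1 := by
    linarith [pow_le_one₀ (n := n) h0 h1, pow_le_one₀ (n := n) h0' (sub_le_self 1 h0)]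
  have tendsto_expected_decisions : Tendsto
      (fun n : ℕ => ((2^n : ℕ) : ℝ) * ((1/2) * x^n + (1/2) * (1 - x)^n)) atTop atTop := by
    refine ((tendsto_pow_add_pow_atTop (by positivity) (by positivity) hmax).const_mul_atTop
      one_half_pos).congr fun n => ?_
    rw [mul_pow, mul_pow, Nat.cast_pow, Nat.cast_ofNat]
    ring
  simpa only [sub_sub] using tendsto_one_sub_pow_nhds_zero_of_tendsto_mul_atTop
    (Eventually.of_forall decision_prob_le_one) tendsto_expected_decisions
end

section
/- For every real number x with 1/2 < x ≤ 1 and every real ε with 0 < ε < 1, there exist positive integers n and t such that 1 − (1 − (1−x)ⁿ)ᵗ ≤ ε and (1 − xⁿ)ᵗ ≤ ε. -/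
/-!
Write `p = xⁿ` and `q = yⁿ` with `y = 1 - x < x`. By Bernoulli's inequality the first rejection
probability is at most `t * q`, and the second is at most `1 / (1 + t * p)`. So it suffices that
`t * p ≥ 1 / ε` and `t * q ≤ ε`. The least `t` with `t * p ≥ 1 / ε` satisfies
`t * p ≤ 1 / ε + p ≤ (1 + ε) / ε`, a bound independent of `n`, and hence `t * q = t * p * (y / x)ⁿ`
is small for large `n`.
-/

section Bernoulli

variable {R : Type*} [CommRing R] [LinearOrder R] [IsStrictOrderedRing R] {p q ε : R}

lemma one_sub_one_sub_pow_le_mul (hq : q ≤ 2) (t : ℕ) : 1 - (1 - q) ^ t ≤ t * q := by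
  have bernoulli : 1 + t * (1 - q - 1) ≤ (1 - q) ^ t :=
    one_add_mul_sub_le_pow (by linarith) t
  linarith

lemma one_sub_pow_mul_one_add_mul_le_one (hp0 : 0 ≤ p) (hp1 : p ≤ 1) (t : ℕ) :
    (1 - p) ^ t * (1 + t * p) ≤ 1 := by
  have hpow : 0 ≤ (1 - p) ^ t := pow_nonneg (sub_nonneg.2 hp1) t
  have bernoulli : 1 + t * p ≤ (1 + p) ^ t := one_add_mul_le_pow (by linarith) t
  calc (1 - p) ^ t * (1 + t * p) ≤ (1 - p) ^ t * (1 + p) ^ t :=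
        mul_le_mul_of_nonneg_left bernoulli hpow
    _ = (1 - p ^ 2) ^ t := by rw [← mul_pow]; ring
    _ ≤ 1 := pow_le_one₀ (sub_nonneg.2 (pow_le_one₀ hp0 hp1)) (sub_le_self 1 (sq_nonneg p))

lemma one_sub_pow_le_of_one_le_mul (hp0 : 0 ≤ p) (hp1 : p ≤ 1) (hε : 0 ≤ ε) {t : ℕ}
    (ht : 1 ≤ t * (ε * p)) : (1 - p) ^ t ≤ ε := by
  have hpow : 0 ≤ (1 - p) ^ t := pow_nonneg (sub_nonneg.2 hp1) t
  calc (1 - p) ^ t ≤ (1 - p) ^ t * (t * (ε * p)) := le_mul_of_one_le_right hpow ht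
    _ = ε * ((1 - p) ^ t * (t * p)) := by ring
    _ ≤ ε * ((1 - p) ^ t * (1 + t * p)) := by gcongr; exact le_add_of_nonneg_left zero_le_one
    _ ≤ ε := mul_le_of_le_one_right hε (one_sub_pow_mul_one_add_mul_le_one hp0 hp1 t)

end Bernoulli

section Amplification

variable {K : Type*} [Field K] [LinearOrder K] [IsStrictOrderedRing K] [Archimedean K]

lemma exists_nat_mul_mem_Ico {a b : K} (ha : 0 < a) (hb : 0 ≤ b) :
    ∃ t : ℕ, t * a ∈ Set.Ico b (b + a) := by
  let := Archimedean.floorRing K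
  refine ⟨⌈b / a⌉₊, (div_le_iff₀ ha).1 (Nat.le_ceil _), ?_⟩
  calc (⌈b / a⌉₊ : K) * a < (b / a + 1) * a := by
        gcongr
        exact Nat.ceil_lt_add_one (by positivity)
    _ = b + a := by field_simp

lemma exists_pos_one_sub_one_sub_pow_le_and_one_sub_pow_le {p q ε : K} (hp0 : 0 < p) (hp1 : p ≤ 1)
    (hq0 : 0 ≤ q) (hq2 : q ≤ 2) (hε : 0 < ε) (hqp : (1 + ε) * q ≤ ε ^ 2 * p) :
    ∃ t : ℕ, 0 < t ∧ 1 - (1 - q) ^ t ≤ ε ∧ (1 - p) ^ t ≤ ε := by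
  have hεp : 0 < ε * p := mul_pos hε hp0
  obtain ⟨t, ht_ge, ht_lt⟩ := exists_nat_mul_mem_Ico hεp zero_le_one
  have ht : 0 < t := by
    rw [Nat.pos_iff_ne_zero]
    rintro rfl
    norm_num at ht_ge
  have htq : t * q ≤ ε := by
    refine le_of_mul_le_mul_right ?_ hεp
    calc t * q * (ε * p) = t * (ε * p) * q := by ring
      _ ≤ (1 + ε * p) * q := by gcongr
      _ ≤ (1 + ε) * q := by gcongr; exact mul_le_of_le_one_right hε.le hp1
      _ ≤ ε * (ε * p) := by linarith
  exact ⟨t, ht, (one_sub_one_sub_pow_le_mul hq2 t).trans htq,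
    one_sub_pow_le_of_one_le_mul hp0.le hp1 hε.le ht_ge⟩

lemma exists_pos_pow_le_mul_pow {x y c : K} (hy0 : 0 ≤ y) (hyx : y < x) (hc : 0 < c) :
    ∃ n : ℕ, 0 < n ∧ y ^ n ≤ c * x ^ n := by
  have hx0 : 0 < x := hy0.trans_lt hyx
  have hr : y / x < 1 := (div_lt_one hx0).2 hyx
  obtain ⟨n, hn⟩ := exists_pow_lt_of_lt_one hc hr
  refine ⟨n + 1, n.succ_pos, ?_⟩
  rw [← div_le_iff₀ (pow_pos hx0 _), ← div_pow]
  exact (pow_le_pow_of_le_one (by positivity) hr.le n.le_succ).trans hn.le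

theorem amplification_general {x y ε : K} (hy0 : 0 ≤ y) (hyx : y < x) (hx1 : x ≤ 1)
    (hε : 0 < ε) :
    ∃ n t : ℕ, 0 < n ∧ 0 < t ∧ 1 - (1 - y ^ n) ^ t ≤ ε ∧ (1 - x ^ n) ^ t ≤ ε := by
  have hx0 : 0 < x := hy0.trans_lt hyx
  obtain ⟨n, hn, hyn⟩ :=
    exists_pos_pow_le_mul_pow hy0 hyx (show 0 < ε ^ 2 / (1 + ε) by positivity)
  have hyn1 : y ^ n ≤ 1 := pow_le_one₀ hy0 (hyx.le.trans hx1)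
  have hratio : (1 + ε) * y ^ n ≤ ε ^ 2 * x ^ n := by
    rwa [div_mul_eq_mul_div, le_div_iff₀' (by positivity)] at hyn
  obtain ⟨t, ht, hminus, hplus⟩ :=
    exists_pos_one_sub_one_sub_pow_le_and_one_sub_pow_le (pow_pos hx0 n) (pow_le_one₀ hx0.le hx1)
      (pow_nonneg hy0 n) (hyn1.trans one_le_two) hε hratio
  exact ⟨n, t, hn, ht, hminus, hplus⟩

end Amplification

/-- Probability amplification (Gimbert–Oualhadj): for `1/2 < x ≤ 1` and
`0 < ε < 1` there are positive integers `n` (repetitions per round) and `t`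
(rounds) such that both rejection probabilities,
`1 − (1 − (1−x)ⁿ)ᵗ` in the `(−)` branch and `(1 − xⁿ)ᵗ` in the `(+)` branch,
are at most `ε`. -/
theorem amplification (x ε : ℝ) (hx : 1/2 < x) (hx1 : x ≤ 1)
    (hε0 : 0 < ε) (hε1 : ε < 1) :
    ∃ n t : ℕ, 0 < n ∧ 0 < t ∧
      1 - (1 - (1 - x)^n)^t ≤ ε ∧ (1 - x^n)^t ≤ ε := by
  exact amplification_general (by linarith) (by linarith) hx1 hε0
end
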